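/- Fix an integer n ≥ 3 and let Γ_n := {(n,1,0,1), (n+1,0,1,0), (0,0,n+1,0), (0,0,0,n+1), (0,n+1,0,0)} ⊆ ℕ_0^4. Then E_n(Γ_n) = Γ_n, while the (n+1)-completion satisfies E_{n+1}^∞(Γ_n) = Λ(Γ_n) ∩ ℕ_0^4. -/

import Mathlib

open MeasureTheory
open scoped Classical ENNReal

noncomputable section

/-- The `d`-dimensional torus, modelled as `d` copies of `ℝ/ℤ`,
whose product `volume` measure is the normalized Haar measure. -/
abbrev Torus (d : ℕ) := Fin d → AddCircle (1 : ℝ)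

/-- The character `z ↦ z^α` on the torus. -/
def torusChar {d : ℕ} (α : Fin d → ℤ) (x : Torus d) : ℂ :=
  ∏ j, fourier (α j) (x j)

/-- The trigonometric polynomial with frequencies in `F` and coefficients `a`. -/
def trigPoly {d : ℕ} (F : Finset (Fin d → ℤ)) (a : (Fin d → ℤ) → ℂ) (x : Torus d) : ℂ :=
  ∑ α ∈ F, a α * torusChar α x

/-- The set `ℕ₀^d` of multi-indices with nonnegative entries. -/
def NN (d : ℕ) : Set (Fin d → ℤ) := {α | ∀ j, 0 ≤ α j}

/-- `Λ` is a coset in `ℤ^d`, i.e. a translate of a subgroup. -/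
def IsCoset {d : ℕ} (Λ : Set (Fin d → ℤ)) : Prop :=
  ∃ (x : Fin d → ℤ) (H : AddSubgroup (Fin d → ℤ)),
    Λ = (x + ·) '' (H : Set (Fin d → ℤ))

/-- `Λ` is a contractive projection set for `L^p(𝕋^d)`:
the projection onto frequencies in `Λ` is contractive on trigonometric polynomials. -/
def IsContractiveLp (d : ℕ) (p : ℝ≥0∞) (Λ : Set (Fin d → ℤ)) : Prop :=
  ∀ (F : Finset (Fin d → ℤ)) (a : (Fin d → ℤ) → ℂ),
    eLpNorm (trigPoly (F.filter (· ∈ Λ)) a) p volume ≤ eLpNorm (trigPoly F a) p volume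

/-- `Γ` is a contractive projection set for `H^p(𝕋^d)`:
the projection onto frequencies in `Γ` is contractive on analytic polynomials. -/
def IsContractiveHp (d : ℕ) (p : ℝ≥0∞) (Γ : Set (Fin d → ℤ)) : Prop :=
  ∀ F : Finset (Fin d → ℤ), ↑F ⊆ NN d → ∀ a : (Fin d → ℤ) → ℂ,
    eLpNorm (trigPoly (F.filter (· ∈ Γ)) a) p volume ≤ eLpNorm (trigPoly F a) p volume

/-- `Γ` has dimension `k`: the subgroup generated by the differences `γ - γ₀` has rank `k`. -/
def HasDim {d : ℕ} (Γ : Set (Fin d → ℤ)) (k : ℕ) : Prop :=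
  ∀ γ₀ ∈ Γ, Module.finrank ℤ (Submodule.span ℤ ((· - γ₀) '' Γ)) = k

/-- `H^p(𝕋^d)` enjoys the contractive restriction property of dimension `k`:
every `k`-dimensional contractive projection set for `H^p(𝕋^d)` is the restriction
of a coset in `ℤ^d` to `ℕ₀^d`. -/
def ContractiveRestrictionProperty (d : ℕ) (p : ℝ≥0∞) (k : ℕ) : Prop :=
  ∀ Γ : Set (Fin d → ℤ), Γ.Nonempty → Γ ⊆ NN d → HasDim Γ k → IsContractiveHp d p Γ →
    ∃ Λ : Set (Fin d → ℤ), IsCoset Λ ∧ Γ = Λ ∩ NN d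

/-- The coset `Λ(Γ)` in `ℤ^d` generated by `Γ`. -/
def cosetGen {d : ℕ} (Γ : Set (Fin d → ℤ)) : Set (Fin d → ℤ) :=
  ⋃ γ₀ ∈ Γ, (γ₀ + ·) '' (AddSubgroup.closure ((· - γ₀) '' Γ) : Set (Fin d → ℤ))

/-- The `n`-extension `E_n(Γ)`: all points of `Λ(Γ) ∩ ℕ₀^d` at distance at most `n` from `Γ`. -/
def Eext {d : ℕ} (n : ℕ) (Γ : Set (Fin d → ℤ)) : Set (Fin d → ℤ) :=
  {lam | lam ∈ cosetGen Γ ∩ NN d ∧ ∃ γ ∈ Γ, ∃ m : (Fin d → ℤ) →₀ ℤ,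
    (↑m.support : Set (Fin d → ℤ)) ⊆ Γ \ {γ} ∧
    lam = γ + ∑ α ∈ m.support, m α • (α - γ) ∧
    (∑ α ∈ m.support, max (m α) 0) ≤ (n : ℤ) ∧
    (∑ α ∈ m.support, max (-(m α)) 0) ≤ (n : ℤ)}

/-- Iterated `n`-extensions `E_n^k(Γ)`. -/
def EextIter {d : ℕ} (n : ℕ) : ℕ → Set (Fin d → ℤ) → Set (Fin d → ℤ)
  | 0, Γ => Eext n Γ
  | (k + 1), Γ => Eext n (EextIter n k Γ)

/-- The `n`-completion `E_n^∞(Γ)`. -/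
def EextInf {d : ℕ} (n : ℕ) (Γ : Set (Fin d → ℤ)) : Set (Fin d → ℤ) :=
  ⋃ k, EextIter n k Γ

/-- The set `Γ_n = {(n,1,0,1), (n+1,0,1,0), (0,0,n+1,0), (0,0,0,n+1), (0,n+1,0,0)}`
of Example 4.4. -/
def GammaFive (n : ℕ) : Set (Fin 4 → ℤ) :=
  {![(n : ℤ), 1, 0, 1], ![(n : ℤ) + 1, 0, 1, 0], ![0, 0, (n : ℤ) + 1, 0],
    ![0, 0, 0, (n : ℤ) + 1], ![0, (n : ℤ) + 1, 0, 0]}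

lemma core_coeffs (n xa xb xc xd xe : ℤ) (hn : 3 ≤ n) (hs : xa + xb + xc + xd + xe = 1)
    (h1 : 0 ≤ n * xa + (n + 1) * xb) (h2 : 0 ≤ xa + (n + 1) * xe)
    (h3 : 0 ≤ xb + (n + 1) * xc) (h4 : 0 ≤ xa + (n + 1) * xd)
    (hq : max (-xa) 0 + max (-xb) 0 + max (-xc) 0 + max (-xd) 0 + max (-xe) 0 ≤ n) :
    0 ≤ xa ∧ 0 ≤ xb ∧ 0 ≤ xc ∧ 0 ≤ xd ∧ 0 ≤ xe := by
  have key : ∀ x y : ℤ, 0 ≤ x + (n + 1) * y → y < 0 → n + 1 ≤ x := by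
    intro x y h hy
    nlinarith
  have key3 : ∀ x y : ℤ, 0 ≤ x + (n + 1) * y → y ≤ -2 → 2 * (n + 1) ≤ x := by
    intro x y h hy
    nlinarith
  have key2 : ∀ x y : ℤ, 0 ≤ x + (n + 1) * y → x < 0 → 1 ≤ y := by
    intro x y h hx
    by_contra hy
    nlinarith
  have ha : 0 ≤ xa := by
    by_contra hneg
    push Not at hneg
    have e1 := key2 _ _ h2 hneg
    have d1 := key2 _ _ h4 hneg
    have hab : 0 ≤ xa + xb := by
      by_contra hh
      have : (n + 1) * (xa + xb) ≤ (n + 1) * (-1) := by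
        apply mul_le_mul_of_nonneg_left <;> omega
      have : -xa ≤ n := by omega
      nlinarith
    have := key _ _ h3 (by omega)
    omega
  have hb : 0 ≤ xb := by
    by_contra hneg
    push Not at hneg
    have c1 := key2 _ _ h3 hneg
    have hab : 1 ≤ xa + xb := by
      by_contra hh
      have : n * (xa + xb) ≤ n * 0 := by
        apply mul_le_mul_of_nonneg_left <;> omega
      nlinarith
    have : xd < 0 ∨ xe < 0 := by omega
    rcases this with h | h
    · have := key _ _ h4 h
      omega
    · have := key _ _ h2 h
      omega
  have kd := key _ _ h4
  have ke := key _ _ h2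
  have kc := key _ _ h3
  have kd3 := key3 _ _ h4
  have ke3 := key3 _ _ h2
  have kc3 := key3 _ _ h3
  clear h1 h2 h3 h4 key key2 key3
  have hc : 0 ≤ xc := by
    by_contra hneg
    push Not at hneg
    have := kc hneg
    by_cases h : xc ≤ -2
    · have := kc3 h
      omega
    · by_cases hd : xd < 0
      · have := kd hd
        omega
      · by_cases he : xe < 0
        · have := ke he
          omega
        · omega
  have hd : 0 ≤ xd := by
    by_contra hneg
    push Not at hneg
    have := kd hneg
    by_cases h : xd ≤ -2
    · have := kd3 h
      omega
    · by_cases he : xe ≤ -2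
      · have := ke3 he
        omega
      · omega
  have he : 0 ≤ xe := by
    by_contra hneg
    push Not at hneg
    have := ke hneg
    by_cases h : xe ≤ -2
    · have := ke3 h
      omega
    · omega
  exact ⟨ha, hb, hc, hd, he⟩

lemma core_coeffs' (n xa xb xc xd xe : ℤ) (hn : 3 ≤ n) (hs : xa + xb + xc + xd + xe = 1)
    (h1 : 0 ≤ n * xa + (n + 1) * xb) (h2 : 0 ≤ xa + (n + 1) * xe)
    (h3 : 0 ≤ xb + (n + 1) * xc) (h4 : 0 ≤ xa + (n + 1) * xd)
    (hq : max (-xa) 0 + max (-xb) 0 + max (-xc) 0 + max (-xd) 0 + max (-xe) 0 ≤ n) :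
    (xa = 1 ∧ xb = 0 ∧ xc = 0 ∧ xd = 0 ∧ xe = 0) ∨
    (xa = 0 ∧ xb = 1 ∧ xc = 0 ∧ xd = 0 ∧ xe = 0) ∨
    (xa = 0 ∧ xb = 0 ∧ xc = 1 ∧ xd = 0 ∧ xe = 0) ∨
    (xa = 0 ∧ xb = 0 ∧ xc = 0 ∧ xd = 1 ∧ xe = 0) ∨
    (xa = 0 ∧ xb = 0 ∧ xc = 0 ∧ xd = 0 ∧ xe = 1) := by
  have := core_coeffs n xa xb xc xd xe hn hs h1 h2 h3 h4 hq
  clear h1 h2 h3 h4 hq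
  omega

lemma GammaFive_mem_of_coeffs (n : ℕ) (hn : 3 ≤ n) (xa xb xc xd xe : ℤ) (v : Fin 4 → ℤ)
    (hs : xa + xb + xc + xd + xe = 1)
    (hv : v = xa • ![(n : ℤ), 1, 0, 1] + xb • ![(n : ℤ) + 1, 0, 1, 0]
      + xc • ![0, 0, (n : ℤ) + 1, 0] + xd • ![0, 0, 0, (n : ℤ) + 1] + xe • ![0, (n : ℤ) + 1, 0, 0])
    (hN : v ∈ NN 4)
    (hq : max (-xa) 0 + max (-xb) 0 + max (-xc) 0 + max (-xd) 0 + max (-xe) 0 ≤ (n : ℤ)) :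
    v ∈ GammaFive n := by
  have h0 := hN 0
  have h1 := hN 1
  have h2 := hN 2
  have h3 := hN 3
  rw [hv] at h0 h1 h2 h3
  simp at h0 h1 h2 h3
  have := core_coeffs' n xa xb xc xd xe (by exact_mod_cast hn) hs (by linarith) (by linarith)
    (by linarith) (by linarith) hq
  unfold GammaFive
  rcases this with h | h | h | h | h <;> obtain ⟨rfl, rfl, rfl, rfl, rfl⟩ := h <;>
    simp at hv <;> simp [hv]

lemma mem_cosetGen_iff {d : ℕ} {Γ : Set (Fin d → ℤ)} {γ₀ : Fin d → ℤ} (h : γ₀ ∈ Γ)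
    (x : Fin d → ℤ) :
    x ∈ cosetGen Γ ↔ x - γ₀ ∈ AddSubgroup.closure ((· - γ₀) '' Γ) := by
  unfold cosetGen
  simp only [Set.mem_iUnion, Set.mem_image, SetLike.mem_coe]
  constructor
  · rintro ⟨γ₁, h₁, v, hv, rfl⟩
    have hle : AddSubgroup.closure ((· - γ₁) '' Γ) ≤ AddSubgroup.closure ((· - γ₀) '' Γ) := by
      rw [AddSubgroup.closure_le]
      rintro _ ⟨γ, hγ, rfl⟩
      have e : γ - γ₁ = (γ - γ₀) - (γ₁ - γ₀) := by abel
      simp only [SetLike.mem_coe]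
      rw [e]
      exact sub_mem (AddSubgroup.subset_closure ⟨γ, hγ, rfl⟩)
        (AddSubgroup.subset_closure ⟨γ₁, h₁, rfl⟩)
    have e : γ₁ + v - γ₀ = (γ₁ - γ₀) + v := by abel
    rw [e]
    exact add_mem (AddSubgroup.subset_closure ⟨γ₁, h₁, rfl⟩) (hle hv)
  · intro hx
    exact ⟨γ₀, h, x - γ₀, hx, by abel⟩

lemma subset_cosetGen {d : ℕ} (Γ : Set (Fin d → ℤ)) : Γ ⊆ cosetGen Γ := by
  intro x hx
  rw [mem_cosetGen_iff hx]
  simp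

lemma cosetGen_le {d : ℕ} {Γ T : Set (Fin d → ℤ)} (h : T ⊆ cosetGen Γ) :
    cosetGen T ⊆ cosetGen Γ := by
  intro x hx
  have hx' := hx
  unfold cosetGen at hx'
  simp only [Set.mem_iUnion, Set.mem_image, SetLike.mem_coe] at hx'
  obtain ⟨t, ht, -⟩ := hx'
  have ht' := h ht
  unfold cosetGen at ht'
  simp only [Set.mem_iUnion, Set.mem_image, SetLike.mem_coe] at ht'
  obtain ⟨γ₀, hγ₀, -⟩ := ht'
  rw [mem_cosetGen_iff ht] at hx
  rw [mem_cosetGen_iff hγ₀]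
  have h0 := (mem_cosetGen_iff hγ₀ t).1 (h ht)
  have hle : AddSubgroup.closure ((· - t) '' T) ≤ AddSubgroup.closure ((· - γ₀) '' Γ) := by
    rw [AddSubgroup.closure_le]
    rintro _ ⟨γ, hγ, rfl⟩
    have e : γ - t = (γ - γ₀) - (t - γ₀) := by abel
    simp only [SetLike.mem_coe]
    rw [e]
    exact sub_mem ((mem_cosetGen_iff hγ₀ γ).1 (h hγ)) h0
  have e : x - γ₀ = (x - t) + (t - γ₀) := by abel
  rw [e]
  exact add_mem (hle hx) h0

/-- Membership criterion: a finite combination over a finset. -/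
lemma mem_Eext {d : ℕ} {n : ℕ} {T : Set (Fin d → ℤ)} (x γ : Fin d → ℤ) (hx : x ∈ NN d)
    (hγ : γ ∈ T) (m : (Fin d → ℤ) →₀ ℤ) (F : Finset (Fin d → ℤ)) (hF : m.support ⊆ F)
    (hFT : ∀ α ∈ F, α ∈ T ∧ α ≠ γ)
    (he : x = γ + ∑ α ∈ F, m α • (α - γ))
    (hp : (∑ α ∈ F, max (m α) 0) ≤ (n : ℤ))
    (hq : (∑ α ∈ F, max (-(m α)) 0) ≤ (n : ℤ)) : x ∈ Eext n T := by
  refine ⟨⟨?_, hx⟩, γ, hγ, m, ?_, ?_, ?_, ?_⟩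
  · rw [mem_cosetGen_iff hγ, he, add_sub_cancel_left]
    refine sum_mem fun α hα => zsmul_mem ?_ _
    exact AddSubgroup.subset_closure ⟨α, (hFT α hα).1, rfl⟩
  · intro α hα
    exact hFT α (hF hα)
  · rw [he]
    congr 1
    symm
    apply Finset.sum_subset hF
    intro α _ h
    simp [Finsupp.notMem_support_iff.1 h]
  · refine le_trans (le_of_eq ?_) hp
    apply Finset.sum_subset hF
    intro α _ h
    simp [Finsupp.notMem_support_iff.1 h]
  · refine le_trans (le_of_eq ?_) hq
    apply Finset.sum_subset hF
    intro α _ h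
    simp [Finsupp.notMem_support_iff.1 h]

lemma subset_Eext {d : ℕ} (n : ℕ) {T : Set (Fin d → ℤ)} (hT : T ⊆ NN d) : T ⊆ Eext n T := by
  intro x hx
  exact mem_Eext x x (hT hx) hx 0 ∅ (by simp) (by simp) (by simp) (by simp) (by simp)

lemma Eext_subset {d : ℕ} (n : ℕ) (T : Set (Fin d → ℤ)) : Eext n T ⊆ cosetGen T ∩ NN d :=
  fun _ h => h.1

lemma add_sub_mem_Eext {d : ℕ} {n : ℕ} (hn : 2 ≤ n) {T : Set (Fin d → ℤ)} (hT : T ⊆ NN d)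
    {x y z : Fin d → ℤ} (hx : x ∈ T) (hy : y ∈ T) (hz : z ∈ T) (h : x + y - z ∈ NN d) :
    x + y - z ∈ Eext n T := by
  have hn' : (2 : ℤ) ≤ n := by exact_mod_cast hn
  by_cases hxz : x = z
  · subst hxz
    rw [add_sub_cancel_left]
    exact subset_Eext n hT hy
  by_cases hyz : y = z
  · subst hyz
    rw [add_sub_cancel_right]
    exact subset_Eext n hT hx
  by_cases hxy : x = y
  · subst hxy
    refine mem_Eext _ z h hz (Finsupp.single x 2) {x} Finsupp.support_single_subset ?_ ?_ ?_ ?_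
    · simp [hx, hxz]
    · rw [Finset.sum_singleton, Finsupp.single_eq_same]; module
    · simpa using hn'
    · simp
  · refine mem_Eext _ z h hz (Finsupp.single x 1 + Finsupp.single y 1) {x, y} ?_ ?_ ?_ ?_ ?_
    · intro α hα
      by_contra hc
      simp only [Finset.mem_insert, Finset.mem_singleton, not_or] at hc
      simp [Finsupp.single_apply, Ne.symm hc.1, Ne.symm hc.2] at hα
    · simp [hx, hxz, hy, hyz]
    · rw [Finset.sum_pair hxy]
      simp [Finsupp.single_apply, hxy, Ne.symm hxy]; abel
    · rw [Finset.sum_pair hxy]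
      simp [Finsupp.single_apply, hxy, Ne.symm hxy]; omega
    · rw [Finset.sum_pair hxy]
      simp [Finsupp.single_apply, hxy, Ne.symm hxy]

lemma EextIter_subset {d : ℕ} (n : ℕ) (Γ : Set (Fin d → ℤ)) (k : ℕ) :
    EextIter n k Γ ⊆ cosetGen Γ ∩ NN d := by
  induction k with
  | zero => exact Eext_subset n Γ
  | succ k ih =>
    intro x hx
    have := Eext_subset n _ hx
    exact ⟨cosetGen_le (fun y hy => (ih hy).1) this.1, this.2⟩

lemma EextIter_mono {d : ℕ} (n : ℕ) (Γ : Set (Fin d → ℤ)) :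
    Monotone (fun k => EextIter n k Γ) :=
  monotone_nat_of_le_succ fun k =>
    subset_Eext n (fun _ hx => (EextIter_subset n Γ k hx).2)

lemma add_sub_mem_EextInf {d : ℕ} {n : ℕ} (hn : 2 ≤ n) {Γ : Set (Fin d → ℤ)}
    {x y z : Fin d → ℤ} (hx : x ∈ EextInf n Γ) (hy : y ∈ EextInf n Γ) (hz : z ∈ EextInf n Γ)
    (h : x + y - z ∈ NN d) : x + y - z ∈ EextInf n Γ := by
  unfold EextInf at *
  simp only [Set.mem_iUnion] at *
  obtain ⟨i, hi⟩ := hx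
  obtain ⟨j, hj⟩ := hy
  obtain ⟨k, hk⟩ := hz
  have h1 := EextIter_mono n Γ (show i ≤ i + j + k by omega) hi
  have h2 := EextIter_mono n Γ (show j ≤ i + j + k by omega) hj
  have h3 := EextIter_mono n Γ (show k ≤ i + j + k by omega) hk
  exact ⟨i + j + k + 1,
    add_sub_mem_Eext hn (fun _ hx => (EextIter_subset n Γ _ hx).2) h1 h2 h3 h⟩

lemma EextInf_subset {d : ℕ} (n : ℕ) (Γ : Set (Fin d → ℤ)) :
    EextInf n Γ ⊆ cosetGen Γ ∩ NN d :=
  Set.iUnion_subset fun k => EextIter_subset n Γ k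

lemma subset_EextInf {d : ℕ} (n : ℕ) {Γ : Set (Fin d → ℤ)} (h : Γ ⊆ NN d) :
    Γ ⊆ EextInf n Γ := fun _ hx => Set.mem_iUnion.2 ⟨0, subset_Eext n h hx⟩

/-- If the completion contains the origin, it is everything. -/
lemma EextInf_eq_of_zero_mem {d : ℕ} {n : ℕ} (hn : 2 ≤ n) {Γ : Set (Fin d → ℤ)}
    (hΓ : Γ ⊆ NN d) (h0 : (0 : Fin d → ℤ) ∈ EextInf n Γ) :
    EextInf n Γ = cosetGen Γ ∩ NN d := by
  apply Set.Subset.antisymm (EextInf_subset n Γ)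
  have hadd : ∀ x ∈ EextInf n Γ, ∀ y ∈ EextInf n Γ, x + y ∈ EextInf n Γ := by
    intro x hx y hy
    have := add_sub_mem_EextInf hn hx hy h0 (by
      rw [sub_zero]
      exact fun j => add_nonneg ((EextInf_subset n Γ hx).2 j) ((EextInf_subset n Γ hy).2 j))
    rwa [sub_zero] at this
  let G : AddSubgroup (Fin d → ℤ) :=
    { carrier := {v | ∃ s ∈ EextInf n Γ, ∃ t ∈ EextInf n Γ, v = s - t}
      zero_mem' := ⟨0, h0, 0, h0, by simp⟩
      add_mem' := by
        rintro _ _ ⟨s, hs, t, ht, rfl⟩ ⟨s', hs', t', ht', rfl⟩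
        exact ⟨s + s', hadd _ hs _ hs', t + t', hadd _ ht _ ht', by abel⟩
      neg_mem' := by
        rintro _ ⟨s, hs, t, ht, rfl⟩
        exact ⟨t, ht, s, hs, by abel⟩ }
  have hG : ∀ x ∈ Γ, x ∈ G := fun x hx => ⟨x, subset_EextInf n hΓ hx, 0, h0, by simp⟩
  rintro x ⟨hx, hxN⟩
  have hxG : x ∈ G := by
    unfold cosetGen at hx
    simp only [Set.mem_iUnion, Set.mem_image, SetLike.mem_coe] at hx
    obtain ⟨γ, hγ, v, hv, rfl⟩ := hx
    refine add_mem (hG γ hγ) ?_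
    refine (AddSubgroup.closure_le G).2 ?_ hv
    rintro _ ⟨δ, hδ, rfl⟩
    exact sub_mem (hG δ hδ) (hG γ hγ)
  obtain ⟨s, hs, t, ht, rfl⟩ := hxG
  have := add_sub_mem_EextInf hn h0 hs ht (by simpa using hxN)
  simpa using this

lemma GammaFive_subset (n : ℕ) : GammaFive n ⊆ NN 4 := by
  intro x hx
  unfold GammaFive at hx
  simp only [Set.mem_insert_iff, Set.mem_singleton_iff] at hx
  intro j
  rcases hx with rfl | rfl | rfl | rfl | rfl <;> fin_cases j <;> simp <;> omega

lemma sum_five {α M : Type*} [DecidableEq α] [AddCommMonoid M] (f : α → M) {a b c d e : α}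
    (hab : a ≠ b) (hac : a ≠ c) (had : a ≠ d) (hae : a ≠ e) (hbc : b ≠ c) (hbd : b ≠ d)
    (hbe : b ≠ e) (hcd : c ≠ d) (hce : c ≠ e) (hde : d ≠ e) :
    ∑ x ∈ ({a, b, c, d, e} : Finset α), f x = f a + (f b + (f c + (f d + f e))) := by
  rw [Finset.sum_insert, Finset.sum_insert, Finset.sum_insert, Finset.sum_pair hde] <;>
    simp [*]

lemma f_mem (n : ℕ) (hn : 3 ≤ n) : ![0, 0, (n : ℤ), 0] ∈ Eext (n + 1) (GammaFive n) := by
  have hab : ![(n : ℤ), 1, 0, 1] ≠ ![(n : ℤ) + 1, 0, 1, 0] := fun h => by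
    have := congrFun h 1; simp at this
  have had : ![(n : ℤ), 1, 0, 1] ≠ ![0, 0, 0, (n : ℤ) + 1] := fun h => by
    have := congrFun h 1; simp at this
  have hae : ![(n : ℤ), 1, 0, 1] ≠ ![0, (n : ℤ) + 1, 0, 0] := fun h => by
    have := congrFun h 3; simp at this
  have hbd : ![(n : ℤ) + 1, 0, 1, 0] ≠ ![0, 0, 0, (n : ℤ) + 1] := fun h => by
    have := congrFun h 2; simp at this
  have hbe : ![(n : ℤ) + 1, 0, 1, 0] ≠ ![0, (n : ℤ) + 1, 0, 0] := fun h => by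
    have := congrFun h 2; simp at this
  have hde : ![0, 0, 0, (n : ℤ) + 1] ≠ ![0, (n : ℤ) + 1, 0, 0] := fun h => by
    have := congrFun h 3; simp at this; omega
  have hA : ![(n : ℤ), 1, 0, 1] ∈ GammaFive n := by simp [GammaFive]
  have hB : ![(n : ℤ) + 1, 0, 1, 0] ∈ GammaFive n := by simp [GammaFive]
  have hD : ![0, 0, 0, (n : ℤ) + 1] ∈ GammaFive n := by simp [GammaFive]
  have hE : ![0, (n : ℤ) + 1, 0, 0] ∈ GammaFive n := by simp [GammaFive]
  have hX : ![0, 0, (n : ℤ), 0] =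
      ![0, (n : ℤ) + 1, 0, 0] + ((-((n : ℤ) + 1)) • (![(n : ℤ), 1, 0, 1] - ![0, (n : ℤ) + 1, 0, 0])
      + ((n : ℤ) • (![(n : ℤ) + 1, 0, 1, 0] - ![0, (n : ℤ) + 1, 0, 0]) +
        (1 : ℤ) • (![0, 0, 0, (n : ℤ) + 1] - ![0, (n : ℤ) + 1, 0, 0]))) := by
    funext j
    fin_cases j <;> simp <;> ring
  have hXN : ![0, 0, (n : ℤ), 0] ∈ NN 4 := by
    intro j
    fin_cases j <;> simp
  generalize ![(n : ℤ), 1, 0, 1] = a at *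
  generalize ![(n : ℤ) + 1, 0, 1, 0] = b at *
  generalize ![0, 0, 0, (n : ℤ) + 1] = d at *
  generalize ![0, (n : ℤ) + 1, 0, 0] = e at *
  let m : (Fin 4 → ℤ) →₀ ℤ :=
    Finsupp.single a (-((n : ℤ) + 1)) + Finsupp.single b (n : ℤ) + Finsupp.single d 1
  have ma : m a = -((n : ℤ) + 1) := by
    simp [m, Finsupp.single_apply, hab.symm, had.symm]
  have mb : m b = n := by
    simp [m, Finsupp.single_apply, hab, hbd.symm]
  have md : m d = 1 := by
    simp [m, Finsupp.single_apply, had, hbd]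
  have hsum : ∀ {M : Type} [AddCommMonoid M] (f : (Fin 4 → ℤ) → M),
      ∑ x ∈ ({a, b, d} : Finset (Fin 4 → ℤ)), f x = f a + (f b + f d) := by
    intro M _ f
    rw [Finset.sum_insert, Finset.sum_pair hbd]
    simp [hab, had]
  refine mem_Eext _ e hXN hE m {a, b, d} ?_ ?_ ?_ ?_ ?_
  · intro α hα
    by_contra hc
    simp only [Finset.mem_insert, Finset.mem_singleton, not_or] at hc
    simp [m, Finsupp.single_apply, Ne.symm hc.1, Ne.symm hc.2.1, Ne.symm hc.2.2] at hα
  · intro α hα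
    simp only [Finset.mem_insert, Finset.mem_singleton] at hα
    rcases hα with rfl | rfl | rfl
    · exact ⟨hA, hae⟩
    · exact ⟨hB, hbe⟩
    · exact ⟨hD, hde⟩
  · rw [hsum, ma, mb, md]
    exact hX
  · rw [hsum, ma, mb, md]
    push_cast
    omega
  · rw [hsum, ma, mb, md]
    push_cast
    omega

lemma zero_mem_EextInf (n : ℕ) (hn : 3 ≤ n) :
    (0 : Fin 4 → ℤ) ∈ EextInf (n + 1) (GammaFive n) := by
  have hf : ![0, 0, (n : ℤ), 0] ∈ EextInf (n + 1) (GammaFive n) :=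
    Set.mem_iUnion.2 ⟨0, f_mem n hn⟩
  have hc : ![0, 0, (n : ℤ) + 1, 0] ∈ EextInf (n + 1) (GammaFive n) :=
    subset_EextInf _ (GammaFive_subset n) (by simp [GammaFive])
  have hk : ∀ k : ℕ, k ≤ n + 1 →
      ![0, 0, (n : ℤ) + 1 - k, 0] ∈ EextInf (n + 1) (GammaFive n) := by
    intro k
    induction k with
    | zero => intro _; simpa using hc
    | succ k ih =>
      intro hk
      have e : ![0, 0, (n : ℤ) + 1 - ((k + 1 : ℕ) : ℤ), 0] =
          ![0, 0, (n : ℤ) + 1 - k, 0] + ![0, 0, (n : ℤ), 0] - ![0, 0, (n : ℤ) + 1, 0] := by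
        funext j
        fin_cases j <;> simp
        ring
      have := add_sub_mem_EextInf (by omega) (ih (by omega)) hf hc (by
        rw [← e]
        intro j
        fin_cases j <;> simp
        omega)
      rwa [← e] at this
  have := hk (n + 1) le_rfl
  have e : ![0, 0, (n : ℤ) + 1 - ((n + 1 : ℕ) : ℤ), 0] = 0 := by
    funext j
    fin_cases j <;> simp
  rwa [e] at this

lemma Eext_GammaFive (n : ℕ) (hn : 3 ≤ n) : Eext n (GammaFive n) = GammaFive n := by
  apply Set.Subset.antisymm _ (subset_Eext n (GammaFive_subset n))
  rintro x ⟨⟨-, hxN⟩, γ, hγ, m, hm, hx, hp, hq⟩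
  have hab : ![(n : ℤ), 1, 0, 1] ≠ ![(n : ℤ) + 1, 0, 1, 0] := fun h => by
    have := congrFun h 1; simp at this
  have hac : ![(n : ℤ), 1, 0, 1] ≠ ![0, 0, (n : ℤ) + 1, 0] := fun h => by
    have := congrFun h 1; simp at this
  have had : ![(n : ℤ), 1, 0, 1] ≠ ![0, 0, 0, (n : ℤ) + 1] := fun h => by
    have := congrFun h 1; simp at this
  have hae : ![(n : ℤ), 1, 0, 1] ≠ ![0, (n : ℤ) + 1, 0, 0] := fun h => by
    have := congrFun h 3; simp at this
  have hbc : ![(n : ℤ) + 1, 0, 1, 0] ≠ ![0, 0, (n : ℤ) + 1, 0] := fun h => by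
    have := congrFun h 0; simp at this; omega
  have hbd : ![(n : ℤ) + 1, 0, 1, 0] ≠ ![0, 0, 0, (n : ℤ) + 1] := fun h => by
    have := congrFun h 2; simp at this
  have hbe : ![(n : ℤ) + 1, 0, 1, 0] ≠ ![0, (n : ℤ) + 1, 0, 0] := fun h => by
    have := congrFun h 2; simp at this
  have hcd : ![0, 0, (n : ℤ) + 1, 0] ≠ ![0, 0, 0, (n : ℤ) + 1] := fun h => by
    have := congrFun h 2; simp at this; omega
  have hce : ![0, 0, (n : ℤ) + 1, 0] ≠ ![0, (n : ℤ) + 1, 0, 0] := fun h => by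
    have := congrFun h 2; simp at this; omega
  have hde : ![0, 0, 0, (n : ℤ) + 1] ≠ ![0, (n : ℤ) + 1, 0, 0] := fun h => by
    have := congrFun h 3; simp at this; omega
  have hmγ : m γ = 0 := by
    by_contra h
    exact (hm (Finsupp.mem_support_iff.2 h)).2 rfl
  have key := GammaFive_mem_of_coeffs n hn
  unfold GammaFive at hγ hm
  generalize ![(n : ℤ), 1, 0, 1] = a at *
  generalize ![(n : ℤ) + 1, 0, 1, 0] = b at *
  generalize ![0, 0, (n : ℤ) + 1, 0] = c at *
  generalize ![0, 0, 0, (n : ℤ) + 1] = d at *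
  generalize ![0, (n : ℤ) + 1, 0, 0] = e at *
  have hsub : m.support ⊆ {a, b, c, d, e} := by
    intro α hα
    have := (hm hα).1
    simpa using this
  have tr : ∀ {M : Type} [AddCommMonoid M] (f : (Fin 4 → ℤ) → M), (∀ α, m α = 0 → f α = 0) →
      ∑ α ∈ m.support, f α = f a + (f b + (f c + (f d + f e))) := by
    intro M _ f hf
    rw [← sum_five f hab hac had hae hbc hbd hbe hcd hce hde]
    apply Finset.sum_subset hsub
    intro α _ h
    exact hf α (Finsupp.notMem_support_iff.1 h)
  rw [tr _ (by intro α h; simp [h])] at hx hp hq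
  simp only [Set.mem_insert_iff, Set.mem_singleton_iff] at hγ
  rcases hγ with rfl | rfl | rfl | rfl | rfl <;> rw [hmγ] at hx hp hq
  · refine key (1 - m b - m c - m d - m e) (m b) (m c) (m d) (m e) x (by ring) ?_ hxN ?_
    · rw [hx]; module
    · omega
  · refine key (m a) (1 - m a - m c - m d - m e) (m c) (m d) (m e) x (by ring) ?_ hxN ?_
    · rw [hx]; module
    · omega
  · refine key (m a) (m b) (1 - m a - m b - m d - m e) (m d) (m e) x (by ring) ?_ hxN ?_
    · rw [hx]; module
    · omega
  · refine key (m a) (m b) (m c) (1 - m a - m b - m c - m e) (m e) x (by ring) ?_ hxN ?_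
    · rw [hx]; module
    · omega
  · refine key (m a) (m b) (m c) (m d) (1 - m a - m b - m c - m d) x (by ring) ?_ hxN ?_
    · rw [hx]; module
    · omega


/-- Example: for `n ≥ 3`, `E_n(Γ_n) = Γ_n` while `E_{n+1}^∞(Γ_n) = Λ(Γ_n) ∩ ℕ₀⁴`. -/
theorem example_dimension_four_four (n : ℕ) (hn : 3 ≤ n) :
    Eext n (GammaFive n) = GammaFive n ∧
    EextInf (n + 1) (GammaFive n) = cosetGen (GammaFive n) ∩ NN 4 := by
  exact ⟨Eext_GammaFive n hn,
    EextInf_eq_of_zero_mem (by omega) (GammaFive_subset n) (zero_mem_EextInf n hn)⟩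


end
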